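/- arXiv:2506.08259 — 2 statements merged into one kernel-verified Lean document; each statement's English description precedes it below -/
import Mathlib

section
/- Let p, q ≥ 2 and 2 ≤ r ≤ min(p,q), and let P0 = {π : (Fin p × Fin q) → ℝ | π_{ij} ≥ 0 for all (i,j), ∑_{ij} π_{ij} = 1, and the p×q real matrix (π_{ij}) has rank < r}. Then the set of polynomials in MvPolynomial (Fin p × Fin q) ℝ that vanish at every point of P0 is exactly the ideal generated by the polynomial 1 − ∑_{ij} X_{ij} together with the determinants of all r×r submatrices of the matrix of variables (X_{ij}) (i.e., for each pair of r-element subsets I of the rows and J of the columns, the polynomial det((X_{ij})_{i∈I, j∈J})). -/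
open Finset

/-- The determinant of the `r × r` submatrix, with rows `s` and columns `t`, of the matrix
of variables `(X_{ij})` in `MvPolynomial (Fin p × Fin q) ℝ`. -/
noncomputable def minorPoly (p q r : ℕ) (s : Finset (Fin p)) (t : Finset (Fin q))
    (hs : s.card = r) (ht : t.card = r) : MvPolynomial (Fin p × Fin q) ℝ :=
  Matrix.det (Matrix.of fun a b : Fin r =>
    MvPolynomial.X ((s.orderIsoOfFin hs a : Fin p), (t.orderIsoOfFin ht b : Fin q)))

/-!
Write `n + 1` for the size of the minors. A polynomial vanishing on the probability matrices of
rank at most `n` can be homogenized by the linear form `∑ X x` without changing its class modulo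
`1 - ∑ X x`; the result then vanishes at every product `Y * Z` of nonnegative matrices with inner
dimension `n`, since such a product is a multiple of a probability matrix of rank at most `n`. As
nonnegative points are Zariski dense, it lies in the kernel of the substitution `X ↦ Y * Z`.

This kernel is the ideal of `(n + 1)`-minors (the second fundamental theorem of invariant theory).
Call a monomial standard if its support contains no `n + 1` cells in strictly antidiagonal
position. Expanding a minor along such a chain rewrites a nonstandard monomial into monomials of
larger `upperWeight`, so standard monomials span modulo the minors. They stay independent after the
substitution: the support of a standard monomial splits into `n` monotone layers, and by the
Fréchet–Hoeffding bound a monotone layer has the largest upper sums among all layers with the same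
row and column sums. Hence the image of a standard monomial `m` contains a monomial that does not
occur in the image of any other monomial of at least the same weight.
-/

theorem exists_fin_coloring_of_relSeries_length_lt {α : Type*} {r : SetRel α α} {n : ℕ}
    (h : ∀ s : RelSeries r, s.length < n) :
    ∃ c : α → Fin n, ∀ x y, (x, y) ∈ r → c x < c y := by
  let lengthsTo (x : α) : Set ℕ := {l | ∃ s : RelSeries r, s.last = x ∧ s.length = l}
  have bddAbove_lengthsTo (x : α) : BddAbove (lengthsTo x) :=
    ⟨n, by rintro _ ⟨s, -, rfl⟩; exact (h s).le⟩
  have exists_longest (x : α) : sSup (lengthsTo x) ∈ lengthsTo x :=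
    Nat.sSup_mem ⟨0, .singleton r x, by simp, rfl⟩ (bddAbove_lengthsTo x)
  refine ⟨fun x => ⟨sSup (lengthsTo x), ?_⟩, fun x y hxy => ?_⟩
  · obtain ⟨s, -, hs⟩ := exists_longest x
    exact hs ▸ h s
  · obtain ⟨s, rfl, hs⟩ := exists_longest x
    have hlong : s.length + 1 ∈ lengthsTo y := ⟨s.snoc y hxy, by simp, by simp⟩
    exact Fin.mk_lt_mk.2 (hs ▸ Nat.lt_of_succ_le (le_csSup (bddAbove_lengthsTo y) hlong))

section UpperSum

variable {α : Type*} [Fintype α] [Preorder α] [DecidableLE α]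

/-- The mass that `m` gives to the principal up-set of `x`: a (reversed) cumulative distribution
function, through which multiplicity functions are compared. -/
def upperSum (m : α → ℕ) (x : α) : ℕ := ∑ y with x ≤ y, m y

/-- The total of all upper sums: the quantity by which monomials are ordered, `m` being the exponent
of a monomial. -/
def upperWeight (m : α → ℕ) : ℕ := ∑ x, upperSum m x

lemma upperSum_injective {α : Type*} [Fintype α] [PartialOrder α] [DecidableLE α] :
    Function.Injective (upperSum : (α → ℕ) → α → ℕ) := by
  classical
  intro f g hfg
  funext x
  induction x using WellFoundedGT.induction with
  | ind x ih =>
    have hx : x ∈ ({y | x ≤ y} : Finset α) := by simp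
    have hsum := congrFun hfg x
    simp only [upperSum, ← add_sum_erase _ _ hx] at hsum
    rw [sum_congr rfl fun y hy => ih y ?_] at hsum
    · exact Nat.add_right_cancel hsum
    · simp only [mem_erase, mem_filter_univ] at hy
      exact lt_of_le_of_ne hy.2 hy.1.symm

lemma upperWeight_lt_upperWeight {α : Type*} [Fintype α] [PartialOrder α] [DecidableLE α]
    {f g : α → ℕ} (hle : upperSum f ≤ upperSum g) (hne : f ≠ g) :
    upperWeight f < upperWeight g :=
  Fintype.sum_strictMono (hle.lt_of_ne (upperSum_injective.ne hne))

lemma upperSum_sum {ν : Type*} [Fintype ν] (L : α → ν → ℕ) :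
    upperSum (fun x => ∑ k, L x k) = fun x => ∑ k, upperSum (L · k) x :=
  funext fun _ => sum_comm

lemma upperWeight_eq_sum (m : α → ℕ) : upperWeight m = ∑ y, m y * #{x | x ≤ y} := by
  simp only [upperWeight, upperSum, sum_filter, card_filter, mul_sum, mul_ite, mul_one, mul_zero]
  exact sum_comm

lemma upperWeight_add (f g : α → ℕ) : upperWeight (f + g) = upperWeight f + upperWeight g := by
  simp [upperWeight_eq_sum, add_mul, sum_add_distrib]

lemma upperWeight_le_degree_mul_card (m : α →₀ ℕ) :
    upperWeight m ≤ m.degree * Fintype.card α := by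
  rw [upperWeight_eq_sum, Finsupp.degree_eq_sum, sum_mul]
  gcongr
  exact card_le_univ _

end UpperSum

section FrechetHoeffding

variable {ι κ : Type*} [Fintype ι] [Fintype κ] [LinearOrder ι] [LinearOrder κ]

lemma upperSum_le_upperSum_of_monovaryOn {f g : ι × κ → ℕ}
    (hrow : ∀ i, ∑ j, f (i, j) = ∑ j, g (i, j)) (hcol : ∀ j, ∑ i, f (i, j) = ∑ i, g (i, j))
    (hg : MonovaryOn Prod.fst Prod.snd g.support) : upperSum f ≤ upperSum g := by
  rintro ⟨a, b⟩
  have hrows : ∑ y : ι × κ with a ≤ y.1, f y = ∑ y : ι × κ with a ≤ y.1, g y := by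
    simp only [sum_filter, Fintype.sum_prod_type]
    exact sum_congr rfl fun i _ => by split_ifs <;> simp [hrow]
  have hcols : ∑ y : ι × κ with b ≤ y.2, f y = ∑ y : ι × κ with b ≤ y.2, g y := by
    simp only [sum_filter, Fintype.sum_prod_type_right]
    exact sum_congr rfl fun j _ => by split_ifs <;> simp [hcol]
  by_cases hrow_le : ∀ y : ι × κ, a ≤ y.1 → g y ≠ 0 → b ≤ y.2
  · calc upperSum f (a, b) ≤ ∑ y : ι × κ with a ≤ y.1, f y :=
          sum_le_sum_of_subset (monotone_filter_right _ fun _ _ h => h.1)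
      _ = ∑ y : ι × κ with a ≤ y.1, g y := hrows
      _ = upperSum g (a, b) := by
          simp only [upperSum, sum_filter]
          refine sum_congr rfl fun y _ => ?_
          grind [Prod.le_def]
  · push Not at hrow_le
    obtain ⟨z, hza, hz, hzb⟩ := hrow_le
    have hcol_le (y : ι × κ) (hyb : b ≤ y.2) (hy : g y ≠ 0) : a ≤ y.1 :=
      hza.trans (hg hz hy (hzb.trans_le hyb))
    calc upperSum f (a, b) ≤ ∑ y : ι × κ with b ≤ y.2, f y :=
          sum_le_sum_of_subset (monotone_filter_right _ fun _ _ h => h.2)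
      _ = ∑ y : ι × κ with b ≤ y.2, g y := hcols
      _ = upperSum g (a, b) := by
          simp only [upperSum, sum_filter]
          refine sum_congr rfl fun y _ => ?_
          grind [Prod.le_def]

end FrechetHoeffding

section ProductHom

open MvPolynomial

variable {ι κ : Type*} {n : ℕ} {R : Type*} [CommSemiring R]

variable (ι κ n R) in
/-- The substitution `X ↦ Y * Z` of a product of generic matrices with inner dimension `n` for the
generic `ι × κ` matrix; the entries of `Y` and `Z` are the variables `Sum.inl` and `Sum.inr`. -/
noncomputable def productHom :
    MvPolynomial (ι × κ) R →ₐ[R] MvPolynomial ((ι × Fin n) ⊕ (Fin n × κ)) R :=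
  aeval fun x => ∑ k, X (.inl (x.1, k)) * X (.inr (k, x.2))

lemma eval_productHom (y : (ι × Fin n) ⊕ (Fin n × κ) → R) (g : MvPolynomial (ι × κ) R) :
    eval y (productHom ι κ n R g) =
      eval (fun x => ∑ k, y (.inl (x.1, k)) * y (.inr (k, x.2))) g := by
  induction g using MvPolynomial.induction_on with
  | C a => simp [productHom]
  | add p q hp hq => simp [hp, hq]
  | mul_X p x hp =>
    rw [map_mul, map_mul, map_mul, hp]
    simp [productHom]

variable [Fintype ι] [Fintype κ]

/-- The exponent in the entries of `Y` and `Z` obtained by expanding `∏ x, (Y * Z) x ^ m x` and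
choosing the summand `Y (i, k) * Z (k, j)` in `L (i, j) k` of the factors at the cell `(i, j)`. It
records the row and column sums of every layer `L · k`. -/
noncomputable def layerExponent (L : ι × κ → Fin n → ℕ) : (ι × Fin n) ⊕ (Fin n × κ) →₀ ℕ :=
  Finsupp.equivFunOnFinite.symm <|
    Sum.elim (fun ik => ∑ j, L (ik.1, j) ik.2) (fun kj => ∑ i, L (i, kj.2) kj.1)

lemma prod_X_mul_X_pow_eq_monomial_layerExponent (L : ι × κ → Fin n → ℕ) :
    ∏ x : ι × κ, ∏ k, (X (Sum.inl (x.1, k)) * X (Sum.inr (k, x.2))) ^ L x k =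
      monomial (layerExponent L) (1 : R) := by
  classical
  have hleft : ∏ x : ι × κ, ∏ k,
        (X (Sum.inl (x.1, k)) : MvPolynomial ((ι × Fin n) ⊕ (Fin n × κ)) R) ^ L x k =
      ∏ ik : ι × Fin n, X (Sum.inl ik) ^ ∑ j, L (ik.1, j) ik.2 := by
    simp only [← prod_pow_eq_pow_sum, Fintype.prod_prod_type]
    exact prod_congr rfl fun i _ => prod_comm
  have hright : ∏ x : ι × κ, ∏ k,
        (X (Sum.inr (k, x.2)) : MvPolynomial ((ι × Fin n) ⊕ (Fin n × κ)) R) ^ L x k =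
      ∏ kj : Fin n × κ, X (Sum.inr kj) ^ ∑ i, L (i, kj.2) kj.1 := by
    simp only [← prod_pow_eq_pow_sum, Fintype.prod_prod_type_right]
    exact prod_congr rfl fun j _ => prod_comm
  simp only [mul_pow, prod_mul_distrib, hleft, hright]
  rw [monomial_eq, Finsupp.prod_fintype _ _ (by simp), Fintype.prod_sum_type, map_one, one_mul]
  rfl

lemma productHom_monomial [DecidableEq ι] [DecidableEq κ] (m : ι × κ →₀ ℕ) (a : R) :
    productHom ι κ n R (monomial m a) =
      ∑ L ∈ Fintype.piFinset fun x => univ.piAntidiag (m x),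
        monomial (layerExponent L) ((∏ x, Nat.multinomial univ (L x)) • a) := by
  rw [productHom, aeval_monomial, Finsupp.prod_fintype _ _ (by simp)]
  simp only [sum_pow_eq_sum_piAntidiag, prod_univ_sum, mul_sum, prod_mul_distrib,
    prod_X_mul_X_pow_eq_monomial_layerExponent]
  refine sum_congr rfl fun L _ => ?_
  rw [map_nsmul, ← Nat.cast_prod, algebraMap_eq, mul_left_comm, C_mul_monomial, mul_one,
    nsmul_eq_mul]

lemma coeff_layerExponent_productHom_monomial_ne_zero [IsAddTorsionFree R]
    {L : ι × κ → Fin n → ℕ} {m : ι × κ →₀ ℕ} (hL : ∀ x, ∑ k, L x k = m x) {a : R} (ha : a ≠ 0) :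
    coeff (layerExponent L) (productHom ι κ n R (monomial m a)) ≠ 0 := by
  classical
  simp only [productHom_monomial, coeff_sum, coeff_monomial, ← sum_filter, ← sum_smul]
  refine (nsmul_eq_zero_iff_right ?_).not.2 ha
  exact (sum_pos (fun L _ => prod_pos fun x _ => Nat.multinomial_pos _ _) ⟨L, by simp [hL]⟩).ne'

lemma exists_layers_of_coeff_productHom_monomial_ne_zero {m : ι × κ →₀ ℕ} {a : R}
    {e : (ι × Fin n) ⊕ (Fin n × κ) →₀ ℕ} (h : coeff e (productHom ι κ n R (monomial m a)) ≠ 0) :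
    ∃ L : ι × κ → Fin n → ℕ, (∀ x, ∑ k, L x k = m x) ∧ layerExponent L = e := by
  classical
  rw [productHom_monomial, coeff_sum] at h
  obtain ⟨L, hL, hcoeff⟩ := exists_ne_zero_of_sum_ne_zero h
  refine ⟨L, by simpa using hL, ?_⟩
  by_contra hne
  exact hcoeff (by rw [coeff_monomial, if_neg hne])

end ProductHom

section Standard

open MvPolynomial

variable {ι κ : Type*} [LinearOrder ι] [LinearOrder κ] {n : ℕ}

/-- A monomial exponent is `n`-standard if it is not divisible by the antidiagonal term of an
`(n + 1)`-minor, that is, its support contains no antidiagonal chain of `n + 1` cells. -/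
def IsStandard (n : ℕ) (m : ι × κ →₀ ℕ) : Prop :=
  ∀ (u : Fin (n + 1) → ι) (v : Fin (n + 1) → κ), StrictMono u → StrictAnti v →
    ∃ a, m (u a, v a) = 0

lemma IsStandard.exists_coloring {m : ι × κ →₀ ℕ} (hm : IsStandard n m) :
    ∃ c : m.support → Fin n, ∀ k, MonovaryOn Prod.fst Prod.snd (Subtype.val '' (c ⁻¹' {k})) := by
  let antidiagonal : SetRel m.support m.support :=
    {e | e.1.1.1 < e.2.1.1 ∧ e.2.1.2 < e.1.1.2}
  have hlength (s : RelSeries antidiagonal) : s.length < n := by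
    by_contra! hn
    have hmono : StrictMono fun a => (s a).1.1 := Fin.strictMono_iff_lt_succ.2 fun a => (s.step a).1
    have hanti : StrictAnti fun a => (s a).1.2 := Fin.strictAnti_iff_succ_lt.2 fun a => (s.step a).2
    have hcast := Fin.strictMono_castLE (Nat.succ_le_succ hn)
    obtain ⟨a, ha⟩ := hm _ _ (hmono.comp hcast) (hanti.comp_strictMono hcast)
    exact Finsupp.mem_support_iff.1 (s _).2 ha
  obtain ⟨c, hc⟩ := exists_fin_coloring_of_relSeries_length_lt hlength
  refine ⟨c, fun k => ?_⟩
  rintro _ ⟨x, hx, rfl⟩ _ ⟨y, hy, rfl⟩ hxy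
  by_contra! hlt
  exact (hc y x ⟨hlt, hxy⟩).ne (hy.trans hx.symm)

lemma IsStandard.exists_monovaryOn_layers {m : ι × κ →₀ ℕ} (hm : IsStandard n m) :
    ∃ L : ι × κ → Fin n → ℕ, (∀ x, ∑ k, L x k = m x) ∧
      ∀ k, MonovaryOn Prod.fst Prod.snd (Function.support (L · k)) := by
  obtain ⟨c, hc⟩ := hm.exists_coloring
  refine ⟨fun x k => if h : x ∈ m.support then if c ⟨x, h⟩ = k then m x else 0 else 0,
    fun x => ?_, fun k => (hc k).subset fun x hx => ?_⟩
  · by_cases hx : x ∈ m.support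
    · simp [hx]
    · simp [Finsupp.notMem_support_iff.1 hx]
  · simp only [Function.mem_support, ne_eq, dite_eq_right_iff, ite_eq_right_iff, not_forall] at hx
    obtain ⟨hx, hk, -⟩ := hx
    exact ⟨⟨x, hx⟩, hk, rfl⟩

lemma upperWeight_sum_lt_of_layerExponent_eq [Fintype ι] [Fintype κ] {L L' : ι × κ → Fin n → ℕ}
    (hexp : layerExponent L' = layerExponent L)
    (hL : ∀ k, MonovaryOn Prod.fst Prod.snd (Function.support (L · k)))
    (hne : (fun x => ∑ k, L' x k) ≠ fun x => ∑ k, L x k) :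
    upperWeight (fun x => ∑ k, L' x k) < upperWeight (fun x => ∑ k, L x k) := by
  refine upperWeight_lt_upperWeight ?_ hne
  have hrow (k i) : ∑ j, L' (i, j) k = ∑ j, L (i, j) k := DFunLike.congr_fun hexp (.inl (i, k))
  have hcol (k j) : ∑ i, L' (i, j) k = ∑ i, L (i, j) k := DFunLike.congr_fun hexp (.inr (k, j))
  rw [upperSum_sum, upperSum_sum]
  exact fun x => sum_le_sum fun k _ => upperSum_le_upperSum_of_monovaryOn (hrow k) (hcol k) (hL k) x

theorem eq_zero_of_productHom_eq_zero_of_isStandard [Finite ι] [Finite κ] {R : Type*}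
    [CommSemiring R] [IsAddTorsionFree R] {g : MvPolynomial (ι × κ) R}
    (hstd : ∀ m ∈ g.support, IsStandard n m) (hg : productHom ι κ n R g = 0) : g = 0 := by
  have := Fintype.ofFinite ι
  have := Fintype.ofFinite κ
  by_contra hne
  obtain ⟨m, hm, hmin⟩ :=
    exists_min_image g.support (fun m => upperWeight m) (support_nonempty.2 hne)
  obtain ⟨L, hLm, hL⟩ := (hstd m hm).exists_monovaryOn_layers
  have hother (m') (hm' : m' ∈ g.support) (hne : m' ≠ m) :
      coeff (layerExponent L) (productHom ι κ n R (monomial m' (coeff m' g))) = 0 := by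
    by_contra hcoeff
    obtain ⟨L', hLm', hexp⟩ := exists_layers_of_coeff_productHom_monomial_ne_zero hcoeff
    have hlt := upperWeight_sum_lt_of_layerExponent_eq hexp hL
    simp only [hLm, hLm'] at hlt
    exact (hmin m' hm').not_gt (hlt (DFunLike.coe_injective.ne hne))
  refine coeff_layerExponent_productHom_monomial_ne_zero hLm (mem_support_iff.1 hm) ?_
  calc coeff (layerExponent L) (productHom ι κ n R (monomial m (coeff m g)))
      = ∑ m' ∈ g.support,
          coeff (layerExponent L) (productHom ι κ n R (monomial m' (coeff m' g))) :=
        (sum_eq_single_of_mem m hm hother).symm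
    _ = coeff (layerExponent L) (productHom ι κ n R g) := by
        rw [← coeff_sum, ← map_sum, ← g.as_sum]
    _ = 0 := by rw [hg, coeff_zero]

end Standard

section MinorIdeal

open Matrix

/-- The ideal generated by the `r`-minors of `A`. Rows and columns are chosen by arbitrary
functions, which adds minors that are zero or repeated up to sign. -/
def minorIdeal {ι κ S : Type*} [CommRing S] (A : Matrix ι κ S) (r : ℕ) : Ideal S :=
  Ideal.span (Set.range fun st : (Fin r → ι) × (Fin r → κ) => (A.submatrix st.1 st.2).det)

lemma det_submatrix_mem_minorIdeal {ι κ S : Type*} [CommRing S] (A : Matrix ι κ S) {r : ℕ}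
    (s : Fin r → ι) (t : Fin r → κ) : (A.submatrix s t).det ∈ minorIdeal A r :=
  Ideal.subset_span ⟨(s, t), rfl⟩

lemma minorIdeal_le_ker_of_rank_map_lt {ι κ S T F : Type*} [Fintype κ] [CommRing S] [CommRing T]
    [IsDomain T] [FunLike F S T] [RingHomClass F S T] (φ : F) {A : Matrix ι κ S} {r : ℕ}
    (h : (A.map φ).rank < r) : minorIdeal A r ≤ RingHom.ker φ := by
  rw [minorIdeal, Ideal.span_le]
  rintro _ ⟨⟨s, t⟩, rfl⟩
  have hmap : φ (A.submatrix s t).det = ((A.map φ).submatrix s t).det :=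
    (φ : S →+* T).map_det _
  rw [SetLike.mem_coe, RingHom.mem_ker, hmap]
  by_contra hdet
  have hrank : ((A.map φ).submatrix s t).rank = r := by simpa using rank_of_det_ne_zero hdet
  exact h.not_ge (hrank ▸ rank_submatrix_le _ s t)

lemma exists_strictMono_comp_perm {α : Type*} [LinearOrder α] {r : ℕ} {s : Fin r → α}
    (hs : Function.Injective s) :
    ∃ (s' : Fin r → α) (σ : Equiv.Perm (Fin r)), StrictMono s' ∧ s' ∘ σ = s :=
  ⟨s ∘ Tuple.sort s, (Tuple.sort s)⁻¹,
    (Tuple.monotone_sort s).strictMono_of_injective (hs.comp (Equiv.injective _)),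
    funext fun a => congrArg s (Equiv.apply_symm_apply _ a)⟩

lemma det_submatrix_comp_perm {ι κ S : Type*} [CommRing S] {r : ℕ} (A : Matrix ι κ S)
    (s : Fin r → ι) (t : Fin r → κ) (σ τ : Equiv.Perm (Fin r)) :
    (A.submatrix (s ∘ σ) (t ∘ τ)).det =
      Equiv.Perm.sign σ * (Equiv.Perm.sign τ * (A.submatrix s t).det) := by
  rw [← det_permute', ← det_permute, submatrix_submatrix, submatrix_submatrix]
  rfl

lemma minorIdeal_eq_span_strictMono {ι κ S : Type*} [LinearOrder ι] [LinearOrder κ] [CommRing S]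
    (A : Matrix ι κ S) (r : ℕ) :
    minorIdeal A r = Ideal.span {d | ∃ (s : Fin r → ι) (t : Fin r → κ),
      StrictMono s ∧ StrictMono t ∧ d = (A.submatrix s t).det} := by
  refine le_antisymm (Ideal.span_le.2 ?_) (Ideal.span_mono ?_)
  · rintro _ ⟨⟨s, t⟩, rfl⟩
    change (A.submatrix s t).det ∈ _
    by_cases hs : Function.Injective s
    · by_cases ht : Function.Injective t
      · obtain ⟨s, σ, hs', rfl⟩ := exists_strictMono_comp_perm hs
        obtain ⟨t, τ, ht', rfl⟩ := exists_strictMono_comp_perm ht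
        rw [det_submatrix_comp_perm]
        exact Ideal.mul_mem_left _ _ <| Ideal.mul_mem_left _ _ <|
          Ideal.subset_span ⟨s, t, hs', ht', rfl⟩
      · simp only [Function.Injective, not_forall] at ht
        obtain ⟨a, b, hab, hne⟩ := ht
        rw [det_zero_of_column_eq hne fun c => congrArg (A (s c)) hab]
        exact zero_mem _
    · simp only [Function.Injective, not_forall] at hs
      obtain ⟨a, b, hab, hne⟩ := hs
      rw [det_zero_of_row_eq hne (funext fun c => congrArg (A · (t c)) hab)]
      exact zero_mem _
  · rintro _ ⟨s, t, -, -, rfl⟩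
    exact ⟨(s, t), rfl⟩

lemma exists_orderEmbOfFin_eq {α : Type*} [LinearOrder α] {r : ℕ} {s : Fin r → α}
    (hs : StrictMono s) : ∃ (S : Finset α) (hS : #S = r), ⇑(S.orderEmbOfFin hS) = s :=
  ⟨univ.map ⟨s, hs.injective⟩, by simp, (orderEmbOfFin_unique _ (by simp) hs).symm⟩

lemma minorIdeal_mvPolynomialX_eq_span_minorPoly (p q r : ℕ) :
    minorIdeal (mvPolynomialX (Fin p) (Fin q) ℝ) r =
      Ideal.span {d | ∃ (s : Finset (Fin p)) (t : Finset (Fin q)) (hs : s.card = r)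
        (ht : t.card = r), d = minorPoly p q r s t hs ht} := by
  rw [minorIdeal_eq_span_strictMono]
  congr 1
  ext d
  constructor
  · rintro ⟨s, t, hs, ht, rfl⟩
    obtain ⟨S, hS, rfl⟩ := exists_orderEmbOfFin_eq hs
    obtain ⟨T, hT, rfl⟩ := exists_orderEmbOfFin_eq ht
    exact ⟨S, T, hS, hT, rfl⟩
  · rintro ⟨S, T, hS, hT, rfl⟩
    exact ⟨S.orderEmbOfFin hS, T.orderEmbOfFin hT, OrderEmbedding.strictMono _,
      OrderEmbedding.strictMono _, rfl⟩

end MinorIdeal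

section Straightening

open MvPolynomial Matrix

/-- The exponent of the monomial `∏ a, X (u a, v a)`. -/
noncomputable def pairExponent {ι κ : Type*} {r : ℕ} (u : Fin r → ι) (v : Fin r → κ) :
    ι × κ →₀ ℕ :=
  ∑ a, Finsupp.single (u a, v a) 1

section

variable {ι κ R : Type*} [CommRing R] {r : ℕ}

lemma det_submatrix_mvPolynomialX (u : Fin r → ι) (v : Fin r → κ) :
    ((mvPolynomialX ι κ R).submatrix u v).det =
      ∑ σ : Equiv.Perm (Fin r), Equiv.Perm.sign σ • monomial (pairExponent u (v ∘ σ)) 1 := by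
  rw [← det_transpose, det_apply]
  refine sum_congr rfl fun σ _ => ?_
  rw [pairExponent, monomial_sum_one]
  rfl

lemma monomial_add_pairExponent (m : ι × κ →₀ ℕ) (u : Fin r → ι) (v : Fin r → κ) :
    monomial (m + pairExponent u v) (1 : R) =
      monomial m 1 * ((mvPolynomialX ι κ R).submatrix u v).det -
        ∑ σ ∈ univ.erase (1 : Equiv.Perm (Fin r)),
          Equiv.Perm.sign σ • monomial (m + pairExponent u (v ∘ σ)) (1 : R) := by
  simp only [det_submatrix_mvPolynomialX, mul_sum, mul_smul_comm, monomial_mul, mul_one]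
  rw [← add_sum_erase _ _ (mem_univ 1), add_sub_cancel_right]
  simp

lemma degree_pairExponent (u : Fin r → ι) (v : Fin r → κ) : (pairExponent u v).degree = r := by
  simp [pairExponent]

lemma pairExponent_le {m : ι × κ →₀ ℕ} {u : Fin r → ι} {v : Fin r → κ}
    (hu : Function.Injective u) (hm : ∀ a, m (u a, v a) ≠ 0) : pairExponent u v ≤ m := by
  classical
  intro x
  rw [pairExponent, Finsupp.finsetSum_apply]
  by_cases hx : ∃ a, (u a, v a) = x
  · obtain ⟨a, rfl⟩ := hx
    rw [sum_eq_single_of_mem a (mem_univ a) fun b _ hb =>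
      Finsupp.single_eq_of_ne fun h => hb (hu (Prod.ext_iff.1 h).1).symm]
    simpa using Nat.one_le_iff_ne_zero.2 (hm a)
  · rw [sum_eq_zero fun a _ => Finsupp.single_eq_of_ne fun h => hx ⟨a, h.symm⟩]
    exact zero_le

end

lemma strictMono_card_filter_le {α : Type*} [Fintype α] [PartialOrder α] [DecidableLE α] :
    StrictMono fun y : α => #{x | x ≤ y} := by
  refine fun x y hxy => card_lt_card ((ssubset_iff_of_subset ?_).2 ⟨y, ?_⟩)
  · exact monotone_filter_right _ fun _ _ h => h.trans hxy.le
  · simpa using hxy.not_ge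

lemma sum_mul_lt_sum_mul_comp_perm {n : ℕ} {f g : Fin n → ℕ} (hf : StrictMono f)
    (hg : StrictAnti g) {σ : Equiv.Perm (Fin n)} (hσ : σ ≠ 1) :
    ∑ a, f a * g a < ∑ a, f a * g (σ a) := by
  have hfg : Antivary f g := fun a b hab => hf.monotone (hg.lt_iff_gt.1 hab).le
  refine hfg.sum_mul_lt_sum_mul_comp_perm_iff.2 fun hanti => hσ ?_
  refine (Equiv.Perm.monotone_iff σ).1 fun a b hab => ?_
  by_contra! hlt
  exact hlt.ne (congrArg σ (hab.antisymm (hf.le_iff_le.1 (hanti (hg hlt))))).symm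

variable {ι κ : Type*} [LinearOrder ι] [LinearOrder κ]

lemma upperWeight_pairExponent [Fintype ι] [Fintype κ] {r : ℕ} (u : Fin r → ι) (v : Fin r → κ) :
    upperWeight (pairExponent u v) = ∑ a, #{i | i ≤ u a} * #{j | j ≤ v a} := by
  have hcard (y : ι × κ) : #{x | x ≤ y} = #{i | i ≤ y.1} * #{j | j ≤ y.2} := by
    rw [← card_product, ← univ_product_univ, ← filter_product]
    rfl
  simp only [upperWeight_eq_sum, pairExponent, Finsupp.finsetSum_apply, sum_mul, hcard]
  rw [sum_comm]
  simp [Finsupp.single_apply]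

lemma upperWeight_pairExponent_lt [Fintype ι] [Fintype κ] {r : ℕ} {u : Fin r → ι}
    {v : Fin r → κ} (hu : StrictMono u) (hv : StrictAnti v) {σ : Equiv.Perm (Fin r)} (hσ : σ ≠ 1) :
    upperWeight (pairExponent u v) < upperWeight (pairExponent u (v ∘ σ)) := by
  simp only [upperWeight_pairExponent]
  exact sum_mul_lt_sum_mul_comp_perm (strictMono_card_filter_le.comp hu)
    (strictMono_card_filter_le.comp_strictAnti hv) hσ

variable [Finite ι] [Finite κ] {R : Type*} [CommRing R]

theorem monomial_mem_minorIdeal_sup_restrictSupport (n : ℕ) (m : ι × κ →₀ ℕ) :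
    monomial m (1 : R) ∈ (minorIdeal (mvPolynomialX ι κ R) (n + 1)).restrictScalars R ⊔
      restrictSupport R {m | IsStandard n m} := by
  have := Fintype.ofFinite ι
  have := Fintype.ofFinite κ
  let deficit (m : ι × κ →₀ ℕ) : ℕ := m.degree * Fintype.card (ι × κ) - upperWeight m
  induction m using (measure deficit).wf.induction with
  | _ m ih =>
  by_cases hm : IsStandard n m
  · exact Submodule.mem_sup_right ((monomial_mem_restrictSupport R).2 (Or.inl hm))
  · simp only [IsStandard, not_forall, not_exists] at hm
    obtain ⟨u, v, hu, hv, hm⟩ := hm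
    obtain ⟨m, rfl⟩ := le_iff_exists_add'.1 (pairExponent_le hu.injective hm)
    rw [monomial_add_pairExponent]
    refine sub_mem (Submodule.mem_sup_left ?_) (sum_mem fun σ hσ => ?_)
    · exact Ideal.mul_mem_left _ _ (det_submatrix_mem_minorIdeal _ u v)
    · refine Submodule.smul_of_tower_mem _ (Equiv.Perm.sign σ) (ih _ ?_)
      have hlt := upperWeight_pairExponent_lt hu hv (ne_of_mem_erase hσ)
      have hle := upperWeight_le_degree_mul_card (m + pairExponent u (v ∘ σ))
      simp only [WellFoundedRelation.rel, InvImage, deficit, Finsupp.coe_add, upperWeight_add,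
        map_add, degree_pairExponent] at hle ⊢
      omega

theorem minorIdeal_sup_restrictSupport_isStandard (n : ℕ) :
    (minorIdeal (mvPolynomialX ι κ R) (n + 1)).restrictScalars R ⊔
      restrictSupport R {m | IsStandard n m} = ⊤ := by
  rw [eq_top_iff, ← restrictSupport_univ, restrictSupport_eq_span, Submodule.span_le]
  rintro _ ⟨m, -, rfl⟩
  exact monomial_mem_minorIdeal_sup_restrictSupport n m

end Straightening

section Kernel

open MvPolynomial Matrix

lemma rank_map_productHom_mvPolynomialX_le {ι κ R : Type*} [Fintype κ] [CommRing R] [IsDomain R]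
    {n : ℕ} :
    ((mvPolynomialX ι κ R).map (productHom ι κ n R)).rank ≤ n := by
  let Y : Matrix ι (Fin n) (MvPolynomial ((ι × Fin n) ⊕ (Fin n × κ)) R) :=
    of fun i k => X (.inl (i, k))
  let Z : Matrix (Fin n) κ (MvPolynomial ((ι × Fin n) ⊕ (Fin n × κ)) R) :=
    of fun k j => X (.inr (k, j))
  have hmul : (mvPolynomialX ι κ R).map (productHom ι κ n R) = Y * Z := by
    ext1 i j
    simp [Y, Z, productHom, Matrix.mul_apply]
  calc ((mvPolynomialX ι κ R).map (productHom ι κ n R)).rank ≤ Y.rank :=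
        hmul ▸ rank_mul_le_left Y Z
    _ ≤ n := by simpa using Y.rank_le_card_width

theorem ker_productHom (ι κ R : Type*) [Finite ι] [Finite κ] [CommRing R] [IsDomain R]
    [CharZero R] (n : ℕ) :
    RingHom.ker (productHom ι κ n R) = minorIdeal (mvPolynomialX ι κ R) (n + 1) := by
  have := Fintype.ofFinite ι
  have := Fintype.ofFinite κ
  let _ : LinearOrder ι := .lift' (Fintype.equivFin ι) (Equiv.injective _)
  let _ : LinearOrder κ := .lift' (Fintype.equivFin κ) (Equiv.injective _)
  have hle : minorIdeal (mvPolynomialX ι κ R) (n + 1) ≤ RingHom.ker (productHom ι κ n R) :=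
    minorIdeal_le_ker_of_rank_map_lt _
      (Nat.lt_succ_of_le rank_map_productHom_mvPolynomialX_le)
  refine le_antisymm (fun g hg => ?_) hle
  have hmem : g ∈ (minorIdeal (mvPolynomialX ι κ R) (n + 1)).restrictScalars R ⊔
      restrictSupport R {m | IsStandard n m} := by
    rw [minorIdeal_sup_restrictSupport_isStandard]
    exact Submodule.mem_top
  obtain ⟨d, hd, s, hs, rfl⟩ := Submodule.mem_sup.1 hmem
  have hker : productHom ι κ n R s = 0 :=
    ((RingHom.ker (productHom ι κ n R)).add_mem_iff_right (hle hd)).1 hg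
  have hzero : s = 0 := eq_zero_of_productHom_eq_zero_of_isStandard hs hker
  rwa [hzero, add_zero]

end Kernel

section Homogenize

open MvPolynomial

lemma eval_smul_of_isHomogeneous {σ R : Type*} [CommSemiring R] {f : MvPolynomial σ R} {n : ℕ}
    (hf : f.IsHomogeneous n) (c : R) (x : σ → R) : eval (c • x) f = c ^ n * eval x f := by
  rw [eval_eq, eval_eq, mul_sum]
  refine sum_congr rfl fun m hm => ?_
  have hdeg : ∑ i ∈ m.support, m i = n :=
    (DFunLike.congr_fun Finsupp.degree_eq_weight_one m).trans (hf (mem_support_iff.1 hm))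
  simp only [Pi.smul_apply, smul_eq_mul, mul_pow, prod_mul_distrib, prod_pow_eq_pow_sum, hdeg]
  exact mul_left_comm _ _ _

/-- The homogenization of `g` by `ℓ`, multiplied by one more factor `ℓ`. The extra factor makes it
vanish at the zeros of `ℓ`. -/
noncomputable def homogenizeBy {σ R : Type*} [CommSemiring R] (ℓ g : MvPolynomial σ R) :
    MvPolynomial σ R :=
  ∑ i ∈ range (g.totalDegree + 1), ℓ ^ (g.totalDegree + 1 - i) * homogeneousComponent i g

lemma sub_homogenizeBy_mem_span {σ R : Type*} [CommRing R] (ℓ g : MvPolynomial σ R) :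
    g - homogenizeBy ℓ g ∈ Ideal.span {1 - ℓ} := by
  have hsum : g - homogenizeBy ℓ g = ∑ i ∈ range (g.totalDegree + 1),
      (1 - ℓ ^ (g.totalDegree + 1 - i)) * homogeneousComponent i g := by
    simp only [sub_mul, one_mul, sum_sub_distrib, sum_homogeneousComponent, homogenizeBy]
  rw [hsum]
  refine Ideal.sum_mem _ fun i _ => Ideal.mul_mem_right _ _ (Ideal.mem_span_singleton.2 ?_)
  simpa using sub_dvd_pow_sub_pow 1 ℓ (g.totalDegree + 1 - i)

lemma eval_homogenizeBy {σ K : Type*} [Field K] (ℓ g : MvPolynomial σ K) (x : σ → K) :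
    eval x (homogenizeBy ℓ g) =
      eval x ℓ ^ (g.totalDegree + 1) * eval ((eval x ℓ)⁻¹ • x) g := by
  have hsum : eval ((eval x ℓ)⁻¹ • x) g = ∑ i ∈ range (g.totalDegree + 1),
      eval ((eval x ℓ)⁻¹ • x) (homogeneousComponent i g) := by
    rw [← map_sum, sum_homogeneousComponent]
  rw [hsum, homogenizeBy, map_sum, mul_sum]
  refine sum_congr rfl fun i hi => ?_
  have hi' : g.totalDegree + 1 - i ≠ 0 := by have := mem_range.1 hi; omega
  rw [eval_smul_of_isHomogeneous (homogeneousComponent_isHomogeneous i g), map_mul, map_pow,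
    ← mul_assoc]
  congr 1
  obtain hℓ | hℓ := eq_or_ne (eval x ℓ) 0
  · simp [hℓ, hi']
  · rw [pow_sub₀ _ hℓ (mem_range.1 hi).le, inv_pow]

end Homogenize

section VanishingIdeal

open MvPolynomial Matrix

variable {ι κ K : Type*} [Fintype ι] [Fintype κ] [Field K] [LinearOrder K] [IsStrictOrderedRing K]

lemma inv_sum_smul_mem_stdSimplex {σ : Type*} [Fintype σ] {x : σ → K} (hx : 0 ≤ x)
    (hsum : ∑ i, x i ≠ 0) : (∑ i, x i)⁻¹ • x ∈ stdSimplex K σ := by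
  refine ⟨fun i => mul_nonneg (inv_nonneg.2 (sum_nonneg fun i _ => hx i)) (hx i), ?_⟩
  simp [← mul_sum, hsum]

lemma homogenizeBy_mem_ker_productHom {n : ℕ} {g : MvPolynomial (ι × κ) K}
    (hg : g ∈ vanishingIdeal K
      {π ∈ stdSimplex K (ι × κ) | (of fun i j => π (i, j)).rank < n + 1}) :
    homogenizeBy (∑ x, X x) g ∈ RingHom.ker (productHom ι κ n K) := by
  rw [RingHom.mem_ker]
  refine funext_set (fun _ => Set.Ici 0) (fun _ => Set.Ici_infinite 0) fun y hy => ?_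
  have hy (a) : 0 ≤ y a := hy a trivial
  let x : ι × κ → K := fun x => ∑ k, y (.inl (x.1, k)) * y (.inr (k, x.2))
  have hx : 0 ≤ x := fun x => sum_nonneg fun k _ => mul_nonneg (hy _) (hy _)
  have hℓ : eval x (∑ ij, X ij) = ∑ ij, x ij := by simp
  rw [eval_productHom, map_zero, eval_homogenizeBy, hℓ]
  obtain hsum | hsum := eq_or_ne (∑ ij, x ij) 0
  · rw [hsum, zero_pow (Nat.succ_ne_zero _), zero_mul]
  refine mul_eq_zero_of_right _ (hg _ ⟨inv_sum_smul_mem_stdSimplex hx hsum, ?_⟩)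
  let Y : Matrix ι (Fin n) K := of fun i k => (∑ ij, x ij)⁻¹ * y (.inl (i, k))
  let Z : Matrix (Fin n) κ K := of fun k j => y (.inr (k, j))
  have hmul : (of fun i j => ((∑ ij, x ij)⁻¹ • x) (i, j)) = Y * Z := by
    ext1 i j
    simp [Matrix.mul_apply, Y, Z, x, mul_sum, mul_assoc]
  rw [hmul, Nat.lt_succ_iff]
  exact (rank_mul_le_left Y Z).trans (by simpa using Y.rank_le_card_width)

lemma span_sup_minorIdeal_le_vanishingIdeal {ι κ K : Type*} [Fintype ι] [Fintype κ] [Field K]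
    [PartialOrder K] (r : ℕ) :
    Ideal.span {1 - ∑ x, X x} ⊔ minorIdeal (mvPolynomialX ι κ K) r ≤
      vanishingIdeal K {π ∈ stdSimplex K (ι × κ) | (of fun i j => π (i, j)).rank < r} := by
  refine sup_le ((Ideal.span_singleton_le_iff_mem _).2 fun π hπ => ?_) fun g hg π hπ => ?_
  · simp [hπ.1.2]
  · have hmap : (mvPolynomialX ι κ K).map (aeval π) = of fun i j => π (i, j) := by
      ext1 i j
      simp
    exact minorIdeal_le_ker_of_rank_map_lt (aeval π) (hmap ▸ hπ.2) hg

theorem stmt_18_general (ι κ K : Type*) [Fintype ι] [Fintype κ] [Field K] [LinearOrder K]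
    [IsStrictOrderedRing K] (r : ℕ) :
    vanishingIdeal K {π ∈ stdSimplex K (ι × κ) | (of fun i j => π (i, j)).rank < r} =
      Ideal.span {1 - ∑ x, X x} ⊔ minorIdeal (mvPolynomialX ι κ K) r := by
  refine le_antisymm (fun g hg => ?_) (span_sup_minorIdeal_le_vanishingIdeal r)
  cases r with
  | zero =>
    refine Ideal.mem_sup_right ?_
    have h1 := det_submatrix_mem_minorIdeal (mvPolynomialX ι κ K) Fin.elim0 Fin.elim0
    rw [det_fin_zero] at h1
    rw [(Ideal.eq_top_iff_one _).2 h1]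
    trivial
  | succ n =>
    rw [← sub_add_cancel g (homogenizeBy (∑ x, X x) g), ← ker_productHom]
    exact add_mem (Ideal.mem_sup_left (sub_homogenizeBy_mem_span _ _))
      (Ideal.mem_sup_right (homogenizeBy_mem_ker_productHom hg))

end VanishingIdeal

/-- the vanishing ideal of the set of probability matrices of rank `< r` is
generated by `1 - ∑ X_{ij}` together with the `r × r` minors of the matrix of variables. -/
theorem stmt_18 (p q r : ℕ) (hp : 2 ≤ p) (hq : 2 ≤ q) (hr2 : 2 ≤ r) (hr : r ≤ min p q)
    (P0 : Set (Fin p × Fin q → ℝ))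
    (hP0 : P0 = {π | (∀ ij, 0 ≤ π ij) ∧ ∑ ij, π ij = 1 ∧
      (Matrix.of fun i j => π (i, j)).rank < r}) :
    ∀ g : MvPolynomial (Fin p × Fin q) ℝ,
      (∀ π ∈ P0, MvPolynomial.eval π g = 0) ↔
      g ∈ Ideal.span (insert
        ((1 : MvPolynomial (Fin p × Fin q) ℝ) - ∑ ij : Fin p × Fin q, MvPolynomial.X ij)
        {d | ∃ (s : Finset (Fin p)) (t : Finset (Fin q)) (hs : s.card = r) (ht : t.card = r),
          d = minorPoly p q r s t hs ht}) := by
  subst hP0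
  rw [Ideal.span_insert, ← minorIdeal_mvPolynomialX_eq_span_minorPoly, ← stmt_18_general]
  simp [MvPolynomial.mem_vanishingIdeal_iff, stdSimplex, and_assoc]
end

section
/- Assume: P0 is an algebraic null hypothesis (P0 = Δ_{k-1} ∩ {π : g(π)=0 for all g ∈ G} with ∅ ≠ P0 ≠ Δ_{k-1}) with projection P̃0 ⊆ Δ̃_{k-1}; the closure of int(Δ̃_{k-1}) ∩ P̃0 equals P̃0; the vanishing ideal I(P̃0) = {h ∈ MvPolynomial (Fin (k−1)) ℝ : h = 0 on P̃0} equals the ideal generated by f_1,…,f_m; m ≤ k−1; and at every point of P̃0 the (k−1)×m matrix whose j-th column is the gradient of f_j (the vector of partial derivatives pderiv i f_j, evaluated at that point) has rank m. If φ is an NTUB test of P0 of sample size n with size α, then there exist polynomials h_{ij} ∈ MvPolynomial (Fin (k−1)) ℝ (1 ≤ i, j ≤ m) such that β_φ(π'_1,…,π'_{k-1}, 1−∑ i π' i) = ∑_{i,j} h_{ij}(π')·f_i(π')·f_j(π') + α for every π' ∈ ℝ^{k-1} — in particular the polynomial β_φ − α, in projected coordinates, belongs to the square I(P̃0)² of the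 vanishing ideal — and the function π' ↦ ∑_{i,j} h_{ij}(π') f_i(π') f_j(π') is ≥ 0 on Δ̃_{k-1}; if moreover φ is SUB, this function is > 0 on Δ̃_{k-1} \ P̃0. -/
open Finset

/-- The probability simplex on a finite index set `ι`. -/
def probSimplex (ι : Type) [Fintype ι] : Set (ι → ℝ) :=
  {π | (∀ i, 0 ≤ π i) ∧ ∑ i, π i = 1}

/-- Count vectors of sample size `n`: functions `x : ι → ℕ` with `∑ i, x i = n`. -/
def countVecs (ι : Type) [Fintype ι] [DecidableEq ι] (n : ℕ) : Finset (ι → ℕ) :=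
  (Fintype.piFinset fun _ : ι => Finset.range (n + 1)).filter fun x => ∑ i, x i = n

/-- A (randomized) test of sample size `n`: values in `[0,1]` on all count vectors. -/
def IsTest (ι : Type) [Fintype ι] [DecidableEq ι] (n : ℕ) (φ : (ι → ℕ) → ℝ) : Prop :=
  ∀ x ∈ countVecs ι n, 0 ≤ φ x ∧ φ x ≤ 1

/-- The power function of a test. -/
noncomputable def powerFn (ι : Type) [Fintype ι] [DecidableEq ι] (n : ℕ)
    (φ : (ι → ℕ) → ℝ) (π : ι → ℝ) : ℝ :=
  ∑ x ∈ countVecs ι n, φ x * (Nat.multinomial Finset.univ x : ℝ) * ∏ i, π i ^ x i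

/-- Unbiasedness relative to the null hypothesis `P0`. -/
def Unbiased (ι : Type) [Fintype ι] [DecidableEq ι] (n : ℕ) (P0 : Set (ι → ℝ))
    (φ : (ι → ℕ) → ℝ) : Prop :=
  ∀ π0 ∈ P0, ∀ πA ∈ probSimplex ι \ P0, powerFn ι n φ π0 ≤ powerFn ι n φ πA

/-- Non-trivial unbiased test: unbiased with non-constant power on the simplex. -/
def IsNTUB (ι : Type) [Fintype ι] [DecidableEq ι] (n : ℕ) (P0 : Set (ι → ℝ))
    (φ : (ι → ℕ) → ℝ) : Prop :=
  Unbiased ι n P0 φ ∧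
    ∃ π ∈ probSimplex ι, ∃ π' ∈ probSimplex ι, powerFn ι n φ π ≠ powerFn ι n φ π'

/-- Strictly unbiased test. -/
def IsSUB (ι : Type) [Fintype ι] [DecidableEq ι] (n : ℕ) (P0 : Set (ι → ℝ))
    (φ : (ι → ℕ) → ℝ) : Prop :=
  ∀ π0 ∈ P0, ∀ πA ∈ probSimplex ι \ P0, powerFn ι n φ π0 < powerFn ι n φ πA

/-- Level-`α` test. -/
def IsLevel (ι : Type) [Fintype ι] [DecidableEq ι] (n : ℕ) (P0 : Set (ι → ℝ)) (α : ℝ)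
    (φ : (ι → ℕ) → ℝ) : Prop :=
  ∀ π ∈ P0, powerFn ι n φ π ≤ α

/-- A test has size `α` if the supremum of its power over `P0` is `α`. -/
def HasSize (ι : Type) [Fintype ι] [DecidableEq ι] (n : ℕ) (P0 : Set (ι → ℝ)) (α : ℝ)
    (φ : (ι → ℕ) → ℝ) : Prop :=
  IsLUB (powerFn ι n φ '' P0) α

/-- Uniformly most powerful unbiased level-`α` test. -/
def IsUMPU (ι : Type) [Fintype ι] [DecidableEq ι] (n : ℕ) (P0 : Set (ι → ℝ)) (α : ℝ)
    (φ : (ι → ℕ) → ℝ) : Prop :=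
  IsLevel ι n P0 α φ ∧ Unbiased ι n P0 φ ∧
    ∀ ψ, IsTest ι n ψ → IsLevel ι n P0 α ψ → Unbiased ι n P0 ψ →
      ∀ πA ∈ probSimplex ι \ P0, powerFn ι n ψ πA ≤ powerFn ι n φ πA

/-- The projected simplex in `ℝ^(k-1)`. -/
def projSimplex (k : ℕ) : Set (Fin (k - 1) → ℝ) :=
  {π' | (∀ i, 0 ≤ π' i) ∧ ∑ i, π' i ≤ 1}

/-- Identify `π' ∈ Δ̃_{k-1}` with `(π'_1, …, π'_{k-1}, 1 - ∑ i, π' i) ∈ Δ_{k-1}`. -/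
def liftProj (k : ℕ) (π' : Fin (k - 1) → ℝ) : Fin k → ℝ :=
  fun i => if h : (i : ℕ) < k - 1 then π' ⟨(i : ℕ), h⟩ else 1 - ∑ j, π' j

/-- Projection of a point of `Δ_{k-1}` onto its first `k-1` coordinates. -/
def projPoint (k : ℕ) (π : Fin k → ℝ) : Fin (k - 1) → ℝ :=
  fun j => π (Fin.castLE (Nat.sub_le k 1) j)

/-!
The simplex minus `P0` is dense in the simplex, so by continuity unbiasedness forces the power
function `β` to equal `α` on `P0` and to be at least `α` on the simplex. In projected coordinates
`q = β - α` thus lies in the vanishing ideal, `q = ∑ j, c j * f j`, and has a minimum at each point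
of the null set. At an interior such point the gradient of `q`, which equals `∑ j, c j • ∇ (f j)`
because the `f j` vanish there, is zero; independence of the gradients makes every `c j` vanish at
interior null points, hence on their closure, so that `c j` lies in the vanishing ideal as well.
-/

open MvPolynomial

section Gradient

variable {σ ι R : Type*}

/-- The gradient of the polynomial `p` at the point `a`, as the vector of formal partial
derivatives evaluated at `a`. -/
noncomputable def gradientAt [CommSemiring R] (a : σ → R) (p : MvPolynomial σ R) : σ → R :=
  fun i ↦ eval a (pderiv i p)

theorem gradientAt_sum_mul_of_eval_eq_zero [CommSemiring R] [Fintype ι] {a : σ → R}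
    (c f : ι → MvPolynomial σ R) (hf : ∀ j, eval a (f j) = 0) :
    gradientAt a (∑ j, c j * f j) = ∑ j, eval a (c j) • gradientAt a (f j) := by
  ext i
  simp [gradientAt, hf]

theorem linearIndependent_gradientAt_of_rank_eq_card [Field R] [Finite σ] [Fintype ι] {a : σ → R}
    {f : ι → MvPolynomial σ R}
    (hrank : (Matrix.of fun i j ↦ eval a (pderiv i (f j))).rank = Fintype.card ι) :
    LinearIndependent R fun j ↦ gradientAt a (f j) := by
  rw [Matrix.rank_eq_finrank_span_cols] at hrank
  exact linearIndependent_iff_card_eq_finrank_span.2 hrank.symm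

theorem hasDerivAt_eval_update [NontriviallyNormedField R] [DecidableEq σ] (a : σ → R) (i : σ)
    (p : MvPolynomial σ R) :
    HasDerivAt (fun t ↦ eval (Function.update a i t) p) (gradientAt a p i) (a i) := by
  unfold gradientAt
  induction p using MvPolynomial.induction_on with
  | C c => simpa using hasDerivAt_const (a i) c
  | add p q hp hq => simpa using hp.fun_add hq
  | mul_X p j hp =>
    have hX : HasDerivAt (fun t ↦ Function.update a i t j) (eval a (pderiv i (X j))) (a i) := by
      simpa [pderiv_X, Pi.single_apply, apply_ite, eq_comm] using
        hasDerivAt_pi.1 (hasDerivAt_update a i (a i)) j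
    simpa [add_comm, mul_comm] using hp.fun_mul hX

theorem gradientAt_eq_zero_of_isLocalMin {a : σ → ℝ} {p : MvPolynomial σ ℝ}
    (hmin : IsLocalMin (fun x ↦ eval x p) a) : gradientAt a p = 0 := by
  classical
  ext i
  have hline : Filter.Tendsto (Function.update a i) (nhds (a i)) (nhds a) := by
    simpa using ((continuous_const (y := a)).update i continuous_id).tendsto (a i)
  have hmin_line : IsLocalMin ((fun x ↦ eval x p) ∘ Function.update a i) (a i) :=
    IsMinFilter.comp_tendsto (by rwa [Function.update_eq_self]) hline
  exact hmin_line.hasDerivAt_eq_zero (hasDerivAt_eval_update a i p)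

theorem eval_coeff_eq_zero_of_isLocalMin [Fintype ι] {a : σ → ℝ} {c f : ι → MvPolynomial σ ℝ}
    (hf : ∀ j, eval a (f j) = 0) (hindep : LinearIndependent ℝ fun j ↦ gradientAt a (f j))
    (hmin : IsLocalMin (fun x ↦ eval x (∑ j, c j * f j)) a) (j : ι) : eval a (c j) = 0 :=
  Fintype.linearIndependent_iff.1 hindep (fun j ↦ eval a (c j))
    ((gradientAt_sum_mul_of_eval_eq_zero c f hf).symm.trans
      (gradientAt_eq_zero_of_isLocalMin hmin)) j

end Gradient

section VanishingIdeal

variable {σ ι R : Type*}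

theorem mem_vanishingIdeal_iff_eval [Field R] {V : Set (σ → R)} {p : MvPolynomial σ R} :
    p ∈ vanishingIdeal R V ↔ ∀ x ∈ V, eval x p = 0 := by
  simp only [mem_vanishingIdeal_iff, aeval_eq_eval]

theorem mem_vanishingIdeal_of_subset_closure [Field R] [TopologicalSpace R] [IsTopologicalRing R]
    [T1Space R] {V W : Set (σ → R)} (hVW : V ⊆ closure W) {p : MvPolynomial σ R}
    (hp : ∀ x ∈ W, eval x p = 0) : p ∈ vanishingIdeal R V := by
  have hclosed : IsClosed {x | eval x p = 0} := isClosed_singleton.preimage (continuous_eval p)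
  exact mem_vanishingIdeal_iff_eval.2 fun x hx ↦ closure_minimal hp hclosed (hVW hx)

theorem mem_span_range_sq_iff_exists_fun [CommSemiring R] [Fintype ι] {f : ι → R} {q : R} :
    q ∈ Ideal.span (Set.range f) ^ 2 ↔ ∃ h : ι → ι → R, ∑ i, ∑ j, h i j * f i * f j = q := by
  rw [pow_two, Ideal.span_mul_span', ← Set.image2_mul, Set.image2_range,
    Ideal.mem_span_range_iff_exists_fun, (Equiv.curry ι ι R).exists_congr_left]
  simp [Fintype.sum_prod_type, mul_assoc]

theorem mem_vanishingIdeal_sq_of_nonneg [Finite ι] {S V : Set (σ → ℝ)}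
    (hV : V ⊆ closure (interior S ∩ V)) {f : ι → MvPolynomial σ ℝ}
    (hf : vanishingIdeal ℝ V = Ideal.span (Set.range f))
    (hindep : ∀ a ∈ interior S ∩ V, LinearIndependent ℝ fun j ↦ gradientAt a (f j))
    {q : MvPolynomial σ ℝ} (hq : ∀ x ∈ V, eval x q = 0) (hnonneg : ∀ x ∈ S, 0 ≤ eval x q) :
    q ∈ vanishingIdeal ℝ V ^ 2 := by
  have := Fintype.ofFinite ι
  have hf_mem (j : ι) : f j ∈ vanishingIdeal ℝ V := hf ▸ Ideal.subset_span ⟨j, rfl⟩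
  obtain ⟨c, rfl⟩ : ∃ c : ι → MvPolynomial σ ℝ, ∑ j, c j * f j = q :=
    Ideal.mem_span_range_iff_exists_fun.1 (hf ▸ mem_vanishingIdeal_iff_eval.2 hq)
  have hc_mem (j : ι) : c j ∈ vanishingIdeal ℝ V := by
    refine mem_vanishingIdeal_of_subset_closure hV fun a ha ↦ ?_
    have hmin : IsLocalMin (fun x ↦ eval x (∑ j, c j * f j)) a := by
      filter_upwards [mem_interior_iff_mem_nhds.1 ha.1] with x hx
      exact (hq a ha.2).trans_le (hnonneg x hx)
    exact eval_coeff_eq_zero_of_isLocalMin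
      (fun j ↦ mem_vanishingIdeal_iff_eval.1 (hf_mem j) a ha.2) (hindep a ha) hmin j
  rw [pow_two]
  exact Ideal.sum_mem _ fun j _ ↦ Ideal.mul_mem_mul (hc_mem j) (hf_mem j)

end VanishingIdeal

section Density

variable {σ : Type*}

theorem eventually_eval_lineMap_ne_zero {g : MvPolynomial σ ℝ} (y : σ → ℝ) {z : σ → ℝ}
    (hgz : eval z g ≠ 0) (t₀ : ℝ) :
    ∀ᶠ t in nhdsWithin t₀ {t₀}ᶜ, eval (AffineMap.lineMap y z t) g ≠ 0 := by
  have hanalytic : AnalyticOnNhd ℝ (fun t : ℝ ↦ eval (AffineMap.lineMap y z t) g) Set.univ := by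
    refine AnalyticOnNhd.aeval_mvPolynomial (fun i t _ ↦ ?_) g
    simp only [AffineMap.lineMap_apply_module', Pi.add_apply, Pi.smul_apply, smul_eq_mul]
    fun_prop
  by_contra hfreq
  have hzero := hanalytic.eqOn_zero_of_preconnected_of_frequently_eq_zero isPreconnected_univ
    (Set.mem_univ t₀) ((Filter.not_eventually.1 hfreq).mono fun _ ↦ not_not.1)
  exact hgz (by simpa using hzero (Set.mem_univ 1))

theorem subset_closure_setOf_eval_ne_zero {S : Set (σ → ℝ)} (hS : Convex ℝ S)
    {g : MvPolynomial σ ℝ} {z : σ → ℝ} (hz : z ∈ S) (hgz : eval z g ≠ 0) :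
    S ⊆ closure {x ∈ S | eval x g ≠ 0} := by
  intro y hy
  have htendsto : Filter.Tendsto (AffineMap.lineMap y z : ℝ → σ → ℝ)
      (nhdsWithin 0 (Set.Ioi 0)) (nhds y) := by
    have hcont : Continuous (AffineMap.lineMap y z : ℝ → σ → ℝ) := AffineMap.lineMap_continuous
    simpa using (hcont.tendsto 0).mono_left nhdsWithin_le_nhds
  refine mem_closure_of_tendsto htendsto ?_
  have hne := (eventually_eval_lineMap_ne_zero y hgz 0).filter_mono
    (nhdsWithin_mono 0 fun t (ht : 0 < t) ↦ ht.ne')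
  filter_upwards [hne, Ioo_mem_nhdsGT one_pos] with t hgt ht
  exact ⟨hS.lineMap_mem hy hz ⟨ht.1.le, ht.2.le⟩, hgt⟩

theorem subset_closure_sdiff_zeros {S : Set (σ → ℝ)} (hS : Convex ℝ S)
    {G : Set (MvPolynomial σ ℝ)} (hG : S ∩ {x | ∀ g ∈ G, eval x g = 0} ≠ S) :
    S ⊆ closure (S \ (S ∩ {x | ∀ g ∈ G, eval x g = 0})) := by
  obtain ⟨z, hz, g, hg, hgz⟩ : ∃ z ∈ S, ∃ g ∈ G, eval z g ≠ 0 := by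
    by_contra! hvanish
    exact hG (Set.inter_eq_left.2 hvanish)
  refine (subset_closure_setOf_eval_ne_zero hS hz hgz).trans (closure_mono ?_)
  exact fun x hx ↦ ⟨hx.1, fun hxG ↦ hx.2 (hxG.2 g hg)⟩

end Density

section Power

variable {ι : Type} [Fintype ι] [DecidableEq ι] {n : ℕ} {P0 : Set (ι → ℝ)} {α : ℝ}
  {φ : (ι → ℕ) → ℝ}

/-- The power function of `φ` as a polynomial in the cell probabilities. -/
noncomputable def powerPoly (n : ℕ) (φ : (ι → ℕ) → ℝ) : MvPolynomial ι ℝ :=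
  ∑ x ∈ countVecs ι n, C (φ x * Nat.multinomial univ x) * ∏ i, X i ^ x i

theorem eval_powerPoly (n : ℕ) (φ : (ι → ℕ) → ℝ) (π : ι → ℝ) :
    eval π (powerPoly n φ) = powerFn ι n φ π := by
  simp [powerPoly, powerFn]

theorem continuous_powerFn (n : ℕ) (φ : (ι → ℕ) → ℝ) : Continuous (powerFn ι n φ) := by
  simpa only [eval_powerPoly] using continuous_eval (powerPoly n φ)

theorem Unbiased.le_powerFn (hφ : Unbiased ι n P0 φ) (hsize : HasSize ι n P0 α φ)
    {π : ι → ℝ} (hπ : π ∈ closure (probSimplex ι \ P0)) : α ≤ powerFn ι n φ π := by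
  have halt : probSimplex ι \ P0 ⊆ {π | α ≤ powerFn ι n φ π} := fun πA hπA ↦
    hsize.2 (Set.forall_mem_image.2 fun π0 hπ0 ↦ hφ π0 hπ0 πA hπA)
  exact closure_minimal halt (isClosed_le continuous_const (continuous_powerFn n φ)) hπ

theorem Unbiased.powerFn_eq (hφ : Unbiased ι n P0 φ) (hsize : HasSize ι n P0 α φ)
    (hP0 : P0 ⊆ closure (probSimplex ι \ P0)) {π : ι → ℝ} (hπ : π ∈ P0) :
    powerFn ι n φ π = α :=
  (hsize.1 ⟨π, hπ, rfl⟩).antisymm (hφ.le_powerFn hsize (hP0 hπ))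

theorem Unbiased.le_powerFn_of_mem_probSimplex (hφ : Unbiased ι n P0 φ)
    (hsize : HasSize ι n P0 α φ) (hP0 : P0 ⊆ closure (probSimplex ι \ P0)) {π : ι → ℝ}
    (hπ : π ∈ probSimplex ι) : α ≤ powerFn ι n φ π := by
  by_cases hπ0 : π ∈ P0
  · exact (hφ.powerFn_eq hsize hP0 hπ0).ge
  · exact hφ.le_powerFn hsize (subset_closure ⟨hπ, hπ0⟩)

theorem HasSize.nonempty (hsize : HasSize ι n P0 α φ) : P0.Nonempty :=
  Set.image_nonempty.1 (IsLUB.nonempty hsize)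

theorem IsSUB.unbiased (hφ : IsSUB ι n P0 φ) : Unbiased ι n P0 φ :=
  fun π0 hπ0 πA hπA ↦ (hφ π0 hπ0 πA hπA).le

theorem IsSUB.lt_powerFn (hφ : IsSUB ι n P0 φ) (hsize : HasSize ι n P0 α φ)
    (hP0 : P0 ⊆ closure (probSimplex ι \ P0)) {πA : ι → ℝ} (hπA : πA ∈ probSimplex ι \ P0) :
    α < powerFn ι n φ πA := by
  obtain ⟨π0, hπ0⟩ := hsize.nonempty
  rw [← hφ.unbiased.powerFn_eq hsize hP0 hπ0]
  exact hφ π0 hπ0 πA hπA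

end Power

section Projection

variable {k n : ℕ} {P0 : Set (Fin k → ℝ)} {α : ℝ} {φ : (Fin k → ℕ) → ℝ}

/-- The projection of the null hypothesis `P0` to the projected simplex. -/
def projNull (k : ℕ) (P0 : Set (Fin k → ℝ)) : Set (Fin (k - 1) → ℝ) :=
  {π' ∈ projSimplex k | liftProj k π' ∈ P0}

theorem liftProj_mem_probSimplex [NeZero k] {π' : Fin (k - 1) → ℝ} (hπ' : π' ∈ projSimplex k) :
    liftProj k π' ∈ probSimplex (Fin k) := by
  obtain ⟨l, rfl⟩ := Nat.exists_eq_succ_of_ne_zero (NeZero.ne k)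
  refine ⟨fun i ↦ ?_, ?_⟩
  · unfold liftProj
    split_ifs
    exacts [hπ'.1 _, sub_nonneg.2 hπ'.2]
  · simp [Fin.sum_univ_castSucc, liftProj]

/-- The coordinates of `liftProj k` as polynomials in the projected coordinates. -/
noncomputable def liftProjPoly (k : ℕ) (i : Fin k) : MvPolynomial (Fin (k - 1)) ℝ :=
  if h : (i : ℕ) < k - 1 then X ⟨i, h⟩ else 1 - ∑ j, X j

theorem eval_liftProjPoly (π' : Fin (k - 1) → ℝ) (i : Fin k) :
    eval π' (liftProjPoly k i) = liftProj k π' i := by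
  unfold liftProjPoly liftProj
  split_ifs <;> simp

/-- The power function of `φ` as a polynomial in the projected coordinates. -/
noncomputable def projPowerPoly (k n : ℕ) (φ : (Fin k → ℕ) → ℝ) :
    MvPolynomial (Fin (k - 1)) ℝ :=
  bind₁ (liftProjPoly k) (powerPoly n φ)

theorem eval_projPowerPoly (k n : ℕ) (φ : (Fin k → ℕ) → ℝ) (π' : Fin (k - 1) → ℝ) :
    eval π' (projPowerPoly k n φ) = powerFn (Fin k) n φ (liftProj k π') := by
  have hcomp := eval₂Hom_bind₁ (RingHom.id ℝ) π' (liftProjPoly k) (powerPoly n φ)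
  have hlift : (fun i ↦ eval π' (liftProjPoly k i)) = liftProj k π' :=
    funext (eval_liftProjPoly π')
  rw [← eval_powerPoly, ← hlift]
  exact hcomp

theorem HasSize.neZero (hsize : HasSize (Fin k) n P0 α φ)
    (hP0 : P0 ⊆ closure (probSimplex (Fin k) \ P0)) : NeZero k := by
  obtain ⟨π, hπ, -⟩ := closure_nonempty_iff.1 (hsize.nonempty.mono hP0)
  refine ⟨?_⟩
  rintro rfl
  simpa using hπ.2

theorem projPowerPoly_sub_C_mem_vanishingIdeal_sq {ι : Type*} [Finite ι]
    (hP0 : P0 ⊆ closure (probSimplex (Fin k) \ P0))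
    (hclos : projNull k P0 ⊆ closure (interior (projSimplex k) ∩ projNull k P0))
    {f : ι → MvPolynomial (Fin (k - 1)) ℝ}
    (hf : vanishingIdeal ℝ (projNull k P0) = Ideal.span (Set.range f))
    (hindep : ∀ π' ∈ interior (projSimplex k) ∩ projNull k P0,
      LinearIndependent ℝ fun j ↦ gradientAt π' (f j))
    (hφ : Unbiased (Fin k) n P0 φ) (hsize : HasSize (Fin k) n P0 α φ) :
    projPowerPoly k n φ - C α ∈ vanishingIdeal ℝ (projNull k P0) ^ 2 := by
  have := hsize.neZero hP0
  refine mem_vanishingIdeal_sq_of_nonneg hclos hf hindep (fun π' hπ' ↦ ?_) (fun π' hπ' ↦ ?_)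
  · rw [map_sub, eval_C, eval_projPowerPoly, hφ.powerFn_eq hsize hP0 hπ'.2, sub_self]
  · rw [map_sub, eval_C, eval_projPowerPoly, sub_nonneg]
    exact hφ.le_powerFn_of_mem_probSimplex hsize hP0 (liftProj_mem_probSimplex hπ')

end Projection

theorem stmt_19_general {k n : ℕ} {P0 : Set (Fin k → ℝ)}
    (hP0 : P0 ⊆ closure (probSimplex (Fin k) \ P0))
    (hclos : projNull k P0 ⊆ closure (interior (projSimplex k) ∩ projNull k P0))
    {ι : Type*} [Fintype ι] {f : ι → MvPolynomial (Fin (k - 1)) ℝ}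
    (hf : vanishingIdeal ℝ (projNull k P0) = Ideal.span (Set.range f))
    (hindep : ∀ π' ∈ interior (projSimplex k) ∩ projNull k P0,
      LinearIndependent ℝ fun j ↦ gradientAt π' (f j))
    {α : ℝ} {φ : (Fin k → ℕ) → ℝ}
    (hφ : Unbiased (Fin k) n P0 φ) (hsize : HasSize (Fin k) n P0 α φ) :
    ∃ h : ι → ι → MvPolynomial (Fin (k - 1)) ℝ,
      (∀ π' : Fin (k - 1) → ℝ, powerFn (Fin k) n φ (liftProj k π') =
        (∑ i, ∑ j, eval π' (h i j) * eval π' (f i) * eval π' (f j)) + α) ∧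
      (∀ π' ∈ projSimplex k,
        0 ≤ ∑ i, ∑ j, eval π' (h i j) * eval π' (f i) * eval π' (f j)) ∧
      (IsSUB (Fin k) n P0 φ → ∀ π' ∈ projSimplex k \ projNull k P0,
        0 < ∑ i, ∑ j, eval π' (h i j) * eval π' (f i) * eval π' (f j)) := by
  have := hsize.neZero hP0
  obtain ⟨h, hh⟩ := mem_span_range_sq_iff_exists_fun.1
    (hf ▸ projPowerPoly_sub_C_mem_vanishingIdeal_sq hP0 hclos hf hindep hφ hsize)
  have heval (π' : Fin (k - 1) → ℝ) :
      ∑ i, ∑ j, eval π' (h i j) * eval π' (f i) * eval π' (f j) =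
        powerFn (Fin k) n φ (liftProj k π') - α := by
    simpa [eval_projPowerPoly] using congrArg (eval π') hh
  refine ⟨h, fun π' ↦ ?_, fun π' hπ' ↦ ?_, fun hSUB π' hπ' ↦ ?_⟩
  · rw [heval, sub_add_cancel]
  · rw [heval, sub_nonneg]
    exact hφ.le_powerFn_of_mem_probSimplex hsize hP0 (liftProj_mem_probSimplex hπ')
  · rw [heval, sub_pos]
    exact hSUB.lt_powerFn hsize hP0
      ⟨liftProj_mem_probSimplex hπ'.1, fun hmem ↦ hπ'.2 ⟨hπ'.1, hmem⟩⟩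

/-- for a vanishing ideal generated by `f_1, …, f_m` whose gradients have full
rank `m` on the null set, every size-α NTUB power function has the representation
`∑_{i,j} h_{ij} f_i f_j + α` with the quadratic part nonnegative on the projected simplex
(and positive off the null set when the test is SUB). -/
theorem stmt_19 (k n : ℕ) (hk : 2 ≤ k) (hn : 1 ≤ n)
    (G : Set (MvPolynomial (Fin k) ℝ)) (P0 : Set (Fin k → ℝ))
    (hP0 : P0 = probSimplex (Fin k) ∩ {π | ∀ g ∈ G, MvPolynomial.eval π g = 0})
    (hne : P0.Nonempty) (hneq : P0 ≠ probSimplex (Fin k))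
    (Pt0 : Set (Fin (k - 1) → ℝ))
    (hPt0 : Pt0 = {π' ∈ projSimplex k | liftProj k π' ∈ P0})
    (hclos : closure (interior (projSimplex k) ∩ Pt0) = Pt0)
    (m : ℕ) (hm : m ≤ k - 1)
    (f : Fin m → MvPolynomial (Fin (k - 1)) ℝ)
    (hVI : ∀ h : MvPolynomial (Fin (k - 1)) ℝ,
      (∀ π' ∈ Pt0, MvPolynomial.eval π' h = 0) ↔ h ∈ Ideal.span (Set.range f))
    (hrank : ∀ π' ∈ Pt0,
      (Matrix.of fun (i : Fin (k - 1)) (j : Fin m) =>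
        MvPolynomial.eval π' (MvPolynomial.pderiv i (f j))).rank = m)
    (α : ℝ) (φ : (Fin k → ℕ) → ℝ)
    (hφ : IsTest (Fin k) n φ) (hNTUB : IsNTUB (Fin k) n P0 φ)
    (hsize : HasSize (Fin k) n P0 α φ) :
    ∃ h : Fin m → Fin m → MvPolynomial (Fin (k - 1)) ℝ,
      (∀ π' : Fin (k - 1) → ℝ,
        powerFn (Fin k) n φ (liftProj k π') =
          (∑ i, ∑ j, MvPolynomial.eval π' (h i j) *
            MvPolynomial.eval π' (f i) * MvPolynomial.eval π' (f j)) + α) ∧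
      (∀ π' ∈ projSimplex k,
        0 ≤ ∑ i, ∑ j, MvPolynomial.eval π' (h i j) *
          MvPolynomial.eval π' (f i) * MvPolynomial.eval π' (f j)) ∧
      (IsSUB (Fin k) n P0 φ → ∀ π' ∈ projSimplex k \ Pt0,
        0 < ∑ i, ∑ j, MvPolynomial.eval π' (h i j) *
          MvPolynomial.eval π' (f i) * MvPolynomial.eval π' (f j)) := by
  subst hPt0 hP0
  have hdense := subset_closure_sdiff_zeros (convex_stdSimplex ℝ (Fin k)) hneq
  exact stmt_19_general (Set.inter_subset_left.trans hdense) hclos.ge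
    (Ideal.ext fun p ↦ mem_vanishingIdeal_iff_eval.trans (hVI p))
    (fun π' hπ' ↦ linearIndependent_gradientAt_of_rank_eq_card (by simpa using hrank π' hπ'.2))
    hNTUB.1 hsize
end
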